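/- For every natural number n, the function β_n = μ_n + ν_n satisfies β_n''(z) − 2(z + 4z/(1+2z²))·β_n'(z) + 2n·β_n(z) = 0 for all z ∈ ℂ with 1 + 2z² ≠ 0, and β_n is not a polynomial: there is no polynomial p ∈ ℂ[X] with β_n(z) = p(z) for all z ∈ ℂ. -/

import Mathlib

/-- Even coefficients c_{2k}(n) of the generalized power series. -/
noncomputable def ceven (n k : ℕ) : ℂ :=
  if k = 0 then 1
  else if k = 1 then -(n : ℂ)
  else (-1) ^ k * 2 ^ k * (n : ℂ) * ((n : ℂ) - ((2 * (k : ℂ) - 1) ^ 2 + 1)) *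
    (∏ j ∈ Finset.Icc 1 (k - 2), ((n : ℂ) - 2 * (1 + (j : ℂ)))) /
      (Nat.factorial (2 * k) : ℂ)

/-- Odd coefficients: `codd n k` is c_{2k-1}(n), for k ≥ 1. -/
noncomputable def codd (n k : ℕ) : ℂ :=
  if k ≤ 1 then 1
  else (-1) ^ (k + 1) * 2 ^ (k - 1) * ((n : ℂ) - ((2 * ((k : ℂ) - 1)) ^ 2 + 1)) *
    (∏ j ∈ Finset.Icc 1 (k - 2), ((n : ℂ) - (2 * (1 + (j : ℂ)) - 1))) /
      (Nat.factorial (2 * k - 1) : ℂ)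

/-- μₙ(z) = Σ_{k≥0} c_{2k}(n)·z^{2k}. -/
noncomputable def muF (n : ℕ) (z : ℂ) : ℂ := ∑' k : ℕ, ceven n k * z ^ (2 * k)

/-- νₙ(z) = Σ_{k≥1} c_{2k-1}(n)·z^{2k-1}. -/
noncomputable def nuF (n : ℕ) (z : ℂ) : ℂ := ∑' k : ℕ, codd n (k + 1) * z ^ (2 * k + 1)

/-- βₙ = μₙ + νₙ. -/
noncomputable def betaF (n : ℕ) (z : ℂ) : ℂ := muF n z + nuF n z

/-!
Write `c_m` for the coefficients of `β_n` and `q(s) = n - (s - 1)² - 1`. From `m = 3` on they factor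
as `c_m = q(m) g_m`, where `g` satisfies the recurrence
`(m + 1)(m + 2) g_{m+2} = -2 (n - m) g_m` of the Hermite equation: up to its first terms, `β_n` is
the image of a Hermite function under the operator `q(z d/dz)`. The Hermite recurrence makes the
series entire, and the polynomial identity `darbouxFactor_intertwining` turns it into the three-term
recurrence which expresses the `X₂`-Hermite equation in `ℂ⟦X⟧`. If `m` and `n` have different
parity, then neither `q(m)` nor any factor `n - (m - 2), n - (m - 4), …` of `g_m` vanishes, so
infinitely many coefficients are nonzero.
-/

open Filter PowerSeries
open scoped Polynomial Topology

/-- The formal power series `A` converges on all of `ℂ`, with sum the function `f`. -/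
def HasEntireSum (A : ℂ⟦X⟧) (f : ℂ → ℂ) : Prop :=
  ∀ z, HasSum (fun m ↦ coeff m A * z ^ m) (f z)

namespace HasEntireSum

variable {A B : ℂ⟦X⟧} {f g : ℂ → ℂ}

lemma function_unique (hf : HasEntireSum A f) (hg : HasEntireSum A g) : f = g :=
  funext fun z ↦ (hf z).unique (hg z)

lemma coe_polynomial (p : ℂ[X]) : HasEntireSum p (fun z ↦ p.eval z) := by
  intro z
  simp only [Polynomial.coeff_coe, Polynomial.eval_eq_sum_range]
  refine hasSum_sum_of_ne_finset_zero fun m hm ↦ ?_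
  rw [Polynomial.coeff_eq_zero_of_natDegree_lt (by simpa using hm), zero_mul]

lemma add (hf : HasEntireSum A f) (hg : HasEntireSum B g) : HasEntireSum (A + B) (f + g) := by
  intro z
  simpa only [map_add, add_mul, Pi.add_apply] using (hf z).add (hg z)

lemma mul (hf : HasEntireSum A f) (hg : HasEntireSum B g) : HasEntireSum (A * B) (f * g) := by
  intro z
  have cauchy_product :=
    hasSum_sum_range_mul_of_summable_norm (hf z).summable.norm (hg z).summable.norm
  rw [(hf z).tsum_eq, (hg z).tsum_eq] at cauchy_product
  refine cauchy_product.congr_fun fun m ↦ ?_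
  rw [coeff_mul, Finset.sum_mul, Finset.Nat.sum_antidiagonal_eq_sum_range_succ_mk]
  refine Finset.sum_congr rfl fun k hk ↦ ?_
  rw [← Nat.add_sub_of_le (Finset.mem_range_succ_iff.mp hk), pow_add, Nat.add_sub_cancel_left]
  ring

lemma derivative (hf : HasEntireSum A f) : HasEntireSum (d⁄dX ℂ A) (deriv f) := by
  intro z
  have summable_bound : Summable fun m ↦ ‖coeff m A‖ * (‖z‖ + 1) ^ m := by
    have norm_radius : ‖((‖z‖ + 1 : ℝ) : ℂ)‖ = ‖z‖ + 1 :=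
      Complex.norm_of_nonneg (by positivity)
    simpa only [norm_mul, norm_pow, norm_radius] using (hf (‖z‖ + 1 : ℝ)).summable.norm
  have termwise : HasSum (fun m ↦ deriv (fun w ↦ coeff m A * w ^ m) z) (deriv f z) := by
    rw [funext fun w ↦ (hf w).tsum_eq.symm]
    refine Complex.hasSum_deriv_of_summable_norm (U := Metric.ball 0 (‖z‖ + 1)) summable_bound
      (fun m ↦ (differentiable_pow m).differentiableOn.const_mul _) Metric.isOpen_ball
      (fun m w hw ↦ ?_) (by simp)
    rw [norm_mul, norm_pow]
    gcongr
    exact (mem_ball_zero_iff.mp hw).le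
  have shifted := (hasSum_nat_add_iff' 1).mpr termwise
  simp only [Finset.sum_range_one, pow_zero, deriv_const, sub_zero] at shifted
  refine shifted.congr_fun fun m ↦ ?_
  rw [coeff_derivative, deriv_const_mul_field, deriv_pow_field, Nat.add_sub_cancel]
  push_cast
  ring

lemma coeff_zero (hf : HasEntireSum A f) : coeff 0 A = f 0 := by
  have only_constant_term : HasSum (fun m ↦ coeff m A * 0 ^ m) (coeff 0 A) := by
    simpa using hasSum_single (f := fun m ↦ coeff m A * 0 ^ m) 0 fun m hm ↦ by simp [hm]
  exact only_constant_term.unique (hf 0)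

lemma series_unique (hA : HasEntireSum A f) (hB : HasEntireSum B f) : A = B := by
  ext m
  induction m generalizing A B f with
  | zero => rw [hA.coeff_zero, hB.coeff_zero]
  | succ m ih =>
    have h := ih hA.derivative hB.derivative
    rw [coeff_derivative, coeff_derivative] at h
    exact mul_right_cancel₀ (Nat.cast_add_one_ne_zero m) h

end HasEntireSum

lemma summable_of_ratio_add_two_le {E : Type*} [NormedAddCommGroup E] [CompleteSpace E]
    {a : ℕ → E} {r : ℝ} (hr : r < 1) (h : ∀ᶠ m in atTop, ‖a (m + 2)‖ ≤ r * ‖a m‖) :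
    Summable a := by
  have ratio_along {i : ℕ → ℕ} (hi : Tendsto i atTop atTop) (hi_succ : ∀ k, i (k + 1) = i k + 2) :
      Summable fun k ↦ a (i k) :=
    summable_of_ratio_norm_eventually_le hr <|
      (hi.eventually h).mono fun k hk ↦ by rwa [hi_succ]
  refine (ratio_along (i := fun k ↦ 2 * k) ?_ fun k ↦ by ring).even_add_odd
    (ratio_along (i := fun k ↦ 2 * k + 1) ?_ fun k ↦ by ring)
  · exact tendsto_id.const_mul_atTop' two_pos
  · exact (tendsto_add_atTop_nat 1).comp (tendsto_id.const_mul_atTop' two_pos)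

lemma formal_x2Hermite_of_coeff_recurrence {ν : ℂ} {A : ℂ⟦X⟧}
    (h₀ : coeff 2 A = -ν * coeff 0 A) (h₁ : 3 * coeff 3 A = (5 - ν) * coeff 1 A)
    (h : ∀ m : ℕ, ((m : ℂ) + 4) * (m + 3) * coeff (m + 4) A +
      (2 * ((m : ℂ) + 2) ^ 2 - 12 * (m + 2) + 2 * ν) * coeff (m + 2) A +
      4 * (ν - m) * coeff m A = 0) :
    ((1 + Polynomial.C 2 * Polynomial.X ^ 2 : ℂ[X]) : ℂ⟦X⟧) *
        (d⁄dX ℂ (d⁄dX ℂ A) + (Polynomial.C (2 * ν) : ℂ[X]) * A) =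
      (Polynomial.C 10 * Polynomial.X + Polynomial.C 4 * Polynomial.X ^ 3 : ℂ[X]) *
        d⁄dX ℂ A := by
  simp only [Polynomial.coe_add, Polynomial.coe_mul, Polynomial.coe_pow, Polynomial.coe_one,
    Polynomial.coe_X, Polynomial.coe_C]
  have lhs_eq (D : ℂ⟦X⟧) : (1 + C 2 * X ^ 2) * D = D + X * (X * (C 2 * D)) := by ring
  have rhs_eq (D : ℂ⟦X⟧) :
      (C 10 * X + C 4 * X ^ 3) * D = X * (C 10 * D + X * (X * (C 4 * D))) := by ring
  rw [lhs_eq, rhs_eq]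
  ext m
  rcases m with _ | _ | _ | m
  all_goals
    simp only [map_add, coeff_C_mul, coeff_zero_X_mul, coeff_succ_X_mul, coeff_derivative,
      zero_add, Nat.reduceAdd]
    push_cast
  · linear_combination 2 * h₀
  · linear_combination 2 * h₁
  · have h₂ := h 0
    push_cast at h₂
    linear_combination h₂
  · have h₃ := h (m + 1)
    push_cast at h₃
    linear_combination h₃

/-- The polynomial `q` for which `q(z d/dz)` maps Hermite functions to solutions of the
`X₂`-Hermite equation with the same parameter `ν`. -/
def darbouxFactor (ν s : ℂ) : ℂ := ν - ((s - 1) ^ 2 + 1)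

lemma darbouxFactor_intertwining (ν s : ℂ) :
    (ν - s) * darbouxFactor ν (s + 2) + s * (s - 1) * darbouxFactor ν (s - 2) =
      (s ^ 2 - 6 * s + ν) * darbouxFactor ν s := by
  unfold darbouxFactor
  ring

lemma darbouxFactor_ne_zero {n m : ℕ} (h : Odd (m + n)) : darbouxFactor n m ≠ 0 := by
  rw [darbouxFactor, sub_ne_zero]
  intro eq
  have eq_int : (n : ℤ) = (m - 1) ^ 2 + 1 := by exact_mod_cast eq
  have even_sum : Even ((m : ℤ) + n) := by
    rw [eq_int, show (m : ℤ) + ((m - 1) ^ 2 + 1) = m * (m - 1) + 2 by ring]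
    exact (Int.even_mul_pred_self m).add even_two
  exact Nat.not_even_iff_odd.mpr h (by exact_mod_cast even_sum)

lemma norm_darbouxFactor_add_three_le (ν : ℂ) (m : ℕ) :
    ‖darbouxFactor ν (m + 3)‖ ≤ (‖ν‖ + 5) * 4 ^ m := by
  have two_pow_bound : (m : ℝ) + 2 ≤ 2 * 2 ^ m := by
    have : (m : ℝ) + 1 ≤ 2 ^ m := by exact_mod_cast m.lt_two_pow_self
    linarith [one_le_pow₀ (M₀ := ℝ) one_le_two (n := m)]
  have four_pow : (4 : ℝ) ^ m = (2 ^ m) ^ 2 := by rw [← pow_mul, mul_comm, pow_mul]; norm_num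
  have one_le_four_pow : (1 : ℝ) ≤ 4 ^ m := one_le_pow₀ (by norm_num)
  calc ‖darbouxFactor ν (m + 3)‖
      = ‖ν - (((m + 2) ^ 2 + 1 : ℕ) : ℂ)‖ := by
        rw [darbouxFactor]
        push_cast
        ring_nf
    _ ≤ ‖ν‖ + ((m + 2) ^ 2 + 1) := by
        refine (norm_sub_le _ _).trans_eq ?_
        rw [Complex.norm_natCast]
        push_cast
        rfl
    _ ≤ ‖ν‖ * 4 ^ m + ((2 * 2 ^ m) ^ 2 + 4 ^ m) := by
        gcongr
        exact le_mul_of_one_le_right (norm_nonneg ν) one_le_four_pow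
    _ = (‖ν‖ + 5) * 4 ^ m := by
        rw [mul_pow, ← four_pow]
        ring

/-- Coefficients of a formal solution of the Hermite equation `h'' - 2zh' + 2νh = 0` from degree `3`
on: `hermiteTail ν m` is the coefficient of `z ^ (m + 3)`. The lower degrees are left out because
there the factorisation of the coefficients of `β` by `darbouxFactor` would divide by `ν - 1` and
`ν - 2`. -/
noncomputable def hermiteTail (ν : ℂ) : ℕ → ℂ
  | 0 => -1 / 3
  | 1 => ν / 6
  | m + 2 => -2 * (ν - (m + 3)) / ((m + 4) * (m + 5)) * hermiteTail ν m

lemma hermiteTail_recurrence (ν : ℂ) (m : ℕ) :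
    ((m : ℂ) + 4) * (m + 5) * hermiteTail ν (m + 2) = -2 * (ν - (m + 3)) * hermiteTail ν m := by
  have h₄ : (m : ℂ) + 4 ≠ 0 := by exact_mod_cast (m + 3).succ_ne_zero
  have h₅ : (m : ℂ) + 5 ≠ 0 := by exact_mod_cast (m + 4).succ_ne_zero
  rw [hermiteTail]
  field_simp

lemma hermiteTail_ne_zero {n : ℕ} : ∀ {m : ℕ}, Even (m + n) → hermiteTail n m ≠ 0
  | 0, _ => by norm_num [hermiteTail]
  | 1, h => by
    have hn : n ≠ 0 := by rintro rfl; simp at h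
    simpa [hermiteTail] using hn
  | m + 2, h => by
    have hm : Even (m + n) := by grind
    have hnm : (n : ℂ) - (m + 3) ≠ 0 := by
      rw [sub_ne_zero]
      exact_mod_cast (by grind : n ≠ m + 3)
    refine right_ne_zero_of_mul (a := ((m : ℂ) + 4) * (m + 5)) ?_
    rw [hermiteTail_recurrence]
    exact mul_ne_zero (mul_ne_zero (by norm_num) hnm) (hermiteTail_ne_zero hm)

lemma norm_hermiteTail_add_two_le (ν : ℂ) (m : ℕ) :
    ‖hermiteTail ν (m + 2)‖ ≤ 2 * (‖ν‖ + 1) / (m + 4 : ℕ) * ‖hermiteTail ν m‖ := by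
  have numerator_le : ‖ν - (m + 3 : ℕ)‖ ≤ (‖ν‖ + 1) * (m + 5 : ℕ) := by
    refine (norm_sub_le _ _).trans ?_
    rw [Complex.norm_natCast]
    push_cast
    nlinarith [mul_nonneg (norm_nonneg ν) m.cast_nonneg, norm_nonneg ν]
  calc ‖hermiteTail ν (m + 2)‖
      = ‖-2 * (ν - (m + 3 : ℕ)) / ((m + 4 : ℕ) * (m + 5 : ℕ)) * hermiteTail ν m‖ := by
        rw [hermiteTail]
        push_cast
        rfl
    _ = 2 * ‖ν - (m + 3 : ℕ)‖ / ((m + 4 : ℕ) * (m + 5 : ℕ)) * ‖hermiteTail ν m‖ := by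
        simp only [norm_mul, norm_div, norm_neg, Complex.norm_ofNat, Complex.norm_natCast]
    _ ≤ 2 * ((‖ν‖ + 1) * (m + 5 : ℕ)) / ((m + 4 : ℕ) * (m + 5 : ℕ)) * ‖hermiteTail ν m‖ := by
        gcongr
    _ = 2 * (‖ν‖ + 1) / (m + 4 : ℕ) * ‖hermiteTail ν m‖ := by
        rw [← mul_assoc, mul_div_mul_right _ _ (Nat.cast_ne_zero.mpr (m + 4).succ_ne_zero)]

lemma summable_hermiteTail_mul_pow (ν z : ℂ) : Summable fun m ↦ hermiteTail ν m * z ^ m := by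
  have ratio_tendsto :
      Tendsto (fun m : ℕ ↦ 2 * (‖ν‖ + 1) / (m + 4 : ℕ) * ‖z‖ ^ 2) atTop (𝓝 0) := by
    simpa using ((tendsto_const_div_atTop_nhds_zero_nat (2 * (‖ν‖ + 1))).comp
      (tendsto_add_atTop_nat 4)).mul_const (‖z‖ ^ 2)
  refine summable_of_ratio_add_two_le one_half_lt_one ?_
  filter_upwards [ratio_tendsto.eventually_le_const one_half_pos] with m hm
  calc ‖hermiteTail ν (m + 2) * z ^ (m + 2)‖
      = ‖hermiteTail ν (m + 2)‖ * ‖z‖ ^ (m + 2) := by rw [norm_mul, norm_pow]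
    _ ≤ 2 * (‖ν‖ + 1) / (m + 4 : ℕ) * ‖hermiteTail ν m‖ * ‖z‖ ^ (m + 2) := by
      gcongr
      exact norm_hermiteTail_add_two_le ν m
    _ = 2 * (‖ν‖ + 1) / (m + 4 : ℕ) * ‖z‖ ^ 2 * ‖hermiteTail ν m * z ^ m‖ := by
      rw [norm_mul, norm_pow]
      ring
    _ ≤ 1 / 2 * ‖hermiteTail ν m * z ^ m‖ := by gcongr

lemma hermiteTail_odd (ν : ℂ) (k : ℕ) :
    hermiteTail ν (2 * k + 1) = (-1) ^ k * 2 ^ (k + 2) * ν *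
      (∏ j ∈ Finset.Icc 1 k, (ν - 2 * (1 + (j : ℂ)))) / (2 * k + 4).factorial := by
  refine eq_div_of_mul_eq (Nat.cast_ne_zero.mpr (Nat.factorial_ne_zero _)) ?_
  induction k with
  | zero =>
    norm_num [hermiteTail, Nat.factorial]
    ring
  | succ k ih =>
    have recurrence := hermiteTail_recurrence ν (2 * k + 1)
    rw [Finset.prod_Icc_succ_top (by omega), show 2 * (k + 1) + 4 = 2 * k + 4 + 1 + 1 by ring,
      Nat.factorial_succ, Nat.factorial_succ, show 2 * (k + 1) + 1 = 2 * k + 1 + 2 by ring]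
    push_cast at recurrence ⊢
    linear_combination (2 * k + 4).factorial * recurrence - 2 * (ν - (2 * k + 4)) * ih

lemma hermiteTail_even (ν : ℂ) (k : ℕ) :
    hermiteTail ν (2 * k) = -(-1) ^ k * 2 ^ (k + 1) *
      (∏ j ∈ Finset.Icc 1 k, (ν - (2 * (1 + (j : ℂ)) - 1))) / (2 * k + 3).factorial := by
  refine eq_div_of_mul_eq (Nat.cast_ne_zero.mpr (Nat.factorial_ne_zero _)) ?_
  induction k with
  | zero => norm_num [hermiteTail, Nat.factorial]
  | succ k ih =>
    have recurrence := hermiteTail_recurrence ν (2 * k)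
    rw [Finset.prod_Icc_succ_top (by omega), show 2 * (k + 1) + 3 = 2 * k + 3 + 1 + 1 by ring,
      Nat.factorial_succ, Nat.factorial_succ, show 2 * (k + 1) = 2 * k + 2 by ring]
    push_cast at recurrence ⊢
    linear_combination (2 * k + 3).factorial * recurrence - 2 * (ν - (2 * k + 3)) * ih

lemma ceven_add_two (n k : ℕ) :
    ceven n (k + 2) = darbouxFactor n (2 * k + 4) * hermiteTail n (2 * k + 1) := by
  rw [hermiteTail_odd, darbouxFactor, ceven, if_neg (by omega), if_neg (by omega),
    Nat.add_sub_cancel, show 2 * (k + 2) = 2 * k + 4 by ring]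
  push_cast
  ring

lemma codd_add_two (n k : ℕ) :
    codd n (k + 2) = darbouxFactor n (2 * k + 3) * hermiteTail n (2 * k) := by
  rw [hermiteTail_even, darbouxFactor, codd, if_neg (by omega), Nat.add_sub_cancel,
    show 2 * (k + 2) - 1 = 2 * k + 3 by omega, show k + 2 - 1 = k + 1 by omega]
  push_cast
  ring

/-- The power series of `β_n`, interleaving the even coefficients `ceven` and the odd coefficients
`codd`; the latter are indexed so that `codd n (k + 1)` belongs to degree `2 * k + 1`. -/
noncomputable def betaSeries (n : ℕ) : ℂ⟦X⟧ :=
  PowerSeries.mk fun m ↦ if Even m then ceven n (m / 2) else codd n (m / 2 + 1)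

lemma coeff_two_mul_betaSeries (n k : ℕ) : coeff (2 * k) (betaSeries n) = ceven n k := by
  simp [betaSeries]

lemma coeff_two_mul_add_one_betaSeries (n k : ℕ) :
    coeff (2 * k + 1) (betaSeries n) = codd n (k + 1) := by
  simp [betaSeries, Nat.mul_add_div]

lemma coeff_zero_betaSeries (n : ℕ) : coeff 0 (betaSeries n) = 1 := by
  simp [betaSeries, ceven]

lemma coeff_one_betaSeries (n : ℕ) : coeff 1 (betaSeries n) = 1 := by
  simp [betaSeries, codd]

lemma coeff_two_betaSeries (n : ℕ) : coeff 2 (betaSeries n) = -n := by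
  simp [betaSeries, ceven]

lemma coeff_add_three_betaSeries (n m : ℕ) :
    coeff (m + 3) (betaSeries n) = darbouxFactor n (m + 3) * hermiteTail n m := by
  obtain ⟨k, rfl | rfl⟩ := m.even_or_odd'
  · rw [show 2 * k + 3 = 2 * (k + 1) + 1 by ring, coeff_two_mul_add_one_betaSeries, codd_add_two]
    push_cast
    rfl
  · rw [show 2 * k + 1 + 3 = 2 * (k + 2) by ring, coeff_two_mul_betaSeries, ceven_add_two]
    push_cast
    ring_nf

lemma coeff_three_betaSeries (n : ℕ) : coeff 3 (betaSeries n) = -(n - 5) / 3 := by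
  rw [coeff_add_three_betaSeries n 0]
  norm_num [darbouxFactor, hermiteTail]
  ring

lemma coeff_four_betaSeries (n : ℕ) : coeff 4 (betaSeries n) = n * (n - 10) / 6 := by
  rw [coeff_add_three_betaSeries n 1]
  norm_num [darbouxFactor, hermiteTail]
  ring

lemma coeff_five_betaSeries (n : ℕ) : coeff 5 (betaSeries n) = (n - 3) * (n - 17) / 30 := by
  rw [coeff_add_three_betaSeries n 2]
  norm_num [darbouxFactor, hermiteTail]
  ring

lemma coeff_six_betaSeries (n : ℕ) : coeff 6 (betaSeries n) = -n * (n - 4) * (n - 26) / 90 := by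
  rw [coeff_add_three_betaSeries n 3]
  norm_num [darbouxFactor, hermiteTail]
  ring

lemma coeff_add_three_betaSeries_recurrence (n m : ℕ) :
    ((m : ℂ) + 7) * (m + 6) * coeff (m + 7) (betaSeries n) +
      (2 * ((m : ℂ) + 5) ^ 2 - 12 * (m + 5) + 2 * n) * coeff (m + 5) (betaSeries n) +
      4 * (n - (m + 3)) * coeff (m + 3) (betaSeries n) = 0 := by
  have upper := hermiteTail_recurrence n (m + 2)
  have lower := hermiteTail_recurrence n m
  have coeff₃ : coeff (m + 3) (betaSeries n) =
      darbouxFactor n (m + 5 - 2) * hermiteTail n m := by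
    rw [coeff_add_three_betaSeries]
    ring_nf
  have coeff₅ : coeff (m + 5) (betaSeries n) =
      darbouxFactor n (m + 5) * hermiteTail n (m + 2) := by
    rw [show m + 5 = m + 2 + 3 from rfl, coeff_add_three_betaSeries]
    push_cast
    ring_nf
  have coeff₇ : coeff (m + 7) (betaSeries n) =
      darbouxFactor n (m + 5 + 2) * hermiteTail n (m + 4) := by
    rw [show m + 7 = m + 4 + 3 from rfl, coeff_add_three_betaSeries]
    push_cast
    ring_nf
  rw [coeff₃, coeff₅, coeff₇]
  push_cast at upper ⊢
  linear_combination darbouxFactor n (m + 5 + 2) * upper +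
    2 * darbouxFactor n (m + 5 - 2) * lower -
    2 * hermiteTail n (m + 2) * darbouxFactor_intertwining n (m + 5)

lemma coeff_betaSeries_recurrence (n m : ℕ) :
    ((m : ℂ) + 4) * (m + 3) * coeff (m + 4) (betaSeries n) +
      (2 * ((m : ℂ) + 2) ^ 2 - 12 * (m + 2) + 2 * n) * coeff (m + 2) (betaSeries n) +
      4 * (n - m) * coeff m (betaSeries n) = 0 := by
  rcases m with _ | _ | _ | m
  · simp only [zero_add, coeff_four_betaSeries, coeff_two_betaSeries, coeff_zero_betaSeries]
    push_cast
    ring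
  · simp only [zero_add, Nat.reduceAdd, coeff_five_betaSeries, coeff_three_betaSeries,
      coeff_one_betaSeries]
    push_cast
    ring
  · simp only [zero_add, Nat.reduceAdd, coeff_six_betaSeries, coeff_four_betaSeries,
      coeff_two_betaSeries]
    push_cast
    ring
  · have h := coeff_add_three_betaSeries_recurrence n m
    push_cast
    linear_combination h

lemma betaSeries_formal_x2Hermite (n : ℕ) :
    ((1 + Polynomial.C 2 * Polynomial.X ^ 2 : ℂ[X]) : ℂ⟦X⟧) *
        (d⁄dX ℂ (d⁄dX ℂ (betaSeries n)) +
          (Polynomial.C (2 * (n : ℂ)) : ℂ[X]) * betaSeries n) =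
      (Polynomial.C 10 * Polynomial.X + Polynomial.C 4 * Polynomial.X ^ 3 : ℂ[X]) *
        d⁄dX ℂ (betaSeries n) := by
  refine formal_x2Hermite_of_coeff_recurrence ?_ ?_ (coeff_betaSeries_recurrence n)
  · rw [coeff_two_betaSeries, coeff_zero_betaSeries, mul_one]
  · rw [coeff_three_betaSeries, coeff_one_betaSeries]
    ring

lemma summable_coeff_betaSeries_mul_pow (n : ℕ) (z : ℂ) :
    Summable fun m ↦ coeff m (betaSeries n) * z ^ m := by
  rw [← summable_nat_add_iff 3]
  refine .of_norm_bounded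
    ((summable_hermiteTail_mul_pow n (4 * z)).norm.mul_left ((‖(n : ℂ)‖ + 5) * ‖z‖ ^ 3))
    fun m ↦ ?_
  calc ‖coeff (m + 3) (betaSeries n) * z ^ (m + 3)‖
      = ‖darbouxFactor n (m + 3)‖ * (‖hermiteTail n m‖ * ‖z‖ ^ (m + 3)) := by
        rw [coeff_add_three_betaSeries, norm_mul, norm_mul, norm_pow, mul_assoc]
    _ ≤ (‖(n : ℂ)‖ + 5) * 4 ^ m * (‖hermiteTail n m‖ * ‖z‖ ^ (m + 3)) := by
        gcongr
        exact norm_darbouxFactor_add_three_le n m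
    _ = (‖(n : ℂ)‖ + 5) * ‖z‖ ^ 3 * ‖hermiteTail n m * (4 * z) ^ m‖ := by
        rw [norm_mul, norm_pow, norm_mul, mul_pow, Complex.norm_ofNat]
        ring

lemma hasEntireSum_betaSeries (n : ℕ) : HasEntireSum (betaSeries n) (betaF n) := by
  intro z
  have summable := summable_coeff_betaSeries_mul_pow n z
  have even_part : HasSum (fun k ↦ coeff (2 * k) (betaSeries n) * z ^ (2 * k)) (muF n z) := by
    simpa only [muF, Function.comp_def, coeff_two_mul_betaSeries] using
      (summable.comp_injective (mul_right_injective₀ two_ne_zero)).hasSum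
  have odd_part :
      HasSum (fun k ↦ coeff (2 * k + 1) (betaSeries n) * z ^ (2 * k + 1)) (nuF n z) := by
    simpa only [nuF, Function.comp_def, coeff_two_mul_add_one_betaSeries] using
      (summable.comp_injective
        ((add_left_injective 1).comp (mul_right_injective₀ two_ne_zero))).hasSum
  exact even_part.even_add_odd odd_part

lemma betaF_x2Hermite (n : ℕ) (z : ℂ) :
    (1 + 2 * z ^ 2) * (deriv (deriv (betaF n)) z + 2 * n * betaF n z) =
      (10 * z + 4 * z ^ 3) * deriv (betaF n) z := by
  have hβ := hasEntireSum_betaSeries n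
  have lhs := (HasEntireSum.coe_polynomial (1 + Polynomial.C 2 * Polynomial.X ^ 2)).mul
    (hβ.derivative.derivative.add
      ((HasEntireSum.coe_polynomial (Polynomial.C (2 * (n : ℂ)))).mul hβ))
  have rhs := (HasEntireSum.coe_polynomial
    (Polynomial.C 10 * Polynomial.X + Polynomial.C 4 * Polynomial.X ^ 3)).mul hβ.derivative
  rw [betaSeries_formal_x2Hermite] at lhs
  simpa using congr_fun (lhs.function_unique rhs) z

lemma coeff_add_three_betaSeries_ne_zero {n m : ℕ} (h : Even (m + n)) :
    coeff (m + 3) (betaSeries n) ≠ 0 := by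
  rw [coeff_add_three_betaSeries]
  refine mul_ne_zero ?_ (hermiteTail_ne_zero h)
  exact_mod_cast darbouxFactor_ne_zero (m := m + 3) (by grind)

lemma betaSeries_ne_coe_polynomial (n : ℕ) (p : ℂ[X]) : betaSeries n ≠ p := by
  intro h
  have coeff_ne_zero : p.coeff (2 * p.natDegree + n + 3) ≠ 0 := by
    rw [← Polynomial.coeff_coe, ← h]
    exact coeff_add_three_betaSeries_ne_zero (by grind)
  exact coeff_ne_zero (Polynomial.coeff_eq_zero_of_natDegree_lt (by omega))

theorem stmt7 (n : ℕ) :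
    (∀ z : ℂ, 1 + 2 * z ^ 2 ≠ 0 →
      deriv (deriv (betaF n)) z
        - 2 * (z + 4 * z / (1 + 2 * z ^ 2)) * deriv (betaF n) z
        + 2 * (n : ℂ) * betaF n z = 0) ∧
    ¬ ∃ p : Polynomial ℂ, ∀ z : ℂ, betaF n z = p.eval z := by
  refine ⟨fun z hz ↦ ?_, fun ⟨p, hp⟩ ↦ ?_⟩
  · have ode := betaF_x2Hermite n z
    field_simp
    linear_combination ode
  · have hβ := hasEntireSum_betaSeries n
    rw [funext hp] at hβ
    exact betaSeries_ne_coe_polynomial n p (hβ.series_unique (.coe_polynomial p))
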